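/- For every n ≥ 1, the hexatag linearization hexatags restricts to a bijection between the set of binary head trees with n leaves and the set of valid hexatag lists of length 2n − 1. -/

import Mathlib

/-- Binary head trees (BHTs). -/
inductive BHT : Type where
  | leaf : BHT
  | nodeL (l r : BHT) : BHT
  | nodeR (l r : BHT) : BHT

/-- Number of leaves of a BHT. -/
def BHT.numLeaves : BHT → ℕ
  | .leaf => 1
  | .nodeL l r => l.numLeaves + r.numLeaves
  | .nodeR l r => l.numLeaves + r.numLeaves

/-- Head position of a BHT whose span of leaf positions starts at `i`. -/
def BHT.headAt : BHT → ℕ → ℕ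
  | .leaf, i => i
  | .nodeL l _, i => l.headAt i
  | .nodeR l r, i => r.headAt (i + l.numLeaves)

/-- Head position of a BHT placed over positions `0, …, numLeaves - 1`. -/
def BHT.head (T : BHT) : ℕ := T.headAt 0

/-- Arc set of a BHT whose span of leaf positions starts at `i`. -/
def BHT.arcsAt : BHT → ℕ → Set (ℕ × ℕ)
  | .leaf, _ => ∅
  | .nodeL l r, i =>
      insert (l.headAt i, r.headAt (i + l.numLeaves)) (l.arcsAt i ∪ r.arcsAt (i + l.numLeaves))
  | .nodeR l r, i =>
      insert (r.headAt (i + l.numLeaves), l.headAt i) (l.arcsAt i ∪ r.arcsAt (i + l.numLeaves))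

/-- Arc set of a BHT placed over positions `0, …, numLeaves - 1`. -/
def BHT.arcs (T : BHT) : Set (ℕ × ℕ) := T.arcsAt 0

/-- `S` is a subtree of `T` (placed over positions `0, …, numLeaves - 1`) whose
leaf span starts at absolute position `i`. -/
inductive BHT.SubtreeAt : BHT → ℕ → BHT → Prop
  | refl (T : BHT) : BHT.SubtreeAt T 0 T
  | inlL (l r S : BHT) (i : ℕ) : BHT.SubtreeAt l i S → BHT.SubtreeAt (BHT.nodeL l r) i S
  | inrL (l r S : BHT) (i : ℕ) :
      BHT.SubtreeAt r i S → BHT.SubtreeAt (BHT.nodeL l r) (l.numLeaves + i) S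
  | inlR (l r S : BHT) (i : ℕ) : BHT.SubtreeAt l i S → BHT.SubtreeAt (BHT.nodeR l r) i S
  | inrR (l r S : BHT) (i : ℕ) :
      BHT.SubtreeAt r i S → BHT.SubtreeAt (BHT.nodeR l r) (l.numLeaves + i) S

/-- `bht2dep T j = some i` if `i` is the unique position with `(i, j) ∈ arcs T`,
and `none` if `j` has no incoming arc. -/
noncomputable def bht2dep (n : ℕ) (T : BHT) : Fin n → Option (Fin n) := fun j =>
  letI := Classical.dec (∃! i : Fin n, ((i : ℕ), (j : ℕ)) ∈ T.arcs)
  if h : ∃! i : Fin n, ((i : ℕ), (j : ℕ)) ∈ T.arcs then some h.choose else none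

/-- `head` is a dependency tree on `n` words: exactly one root (position with
`head r = none`), and every position reaches the root by iterating `head`. -/
def IsDepTree {n : ℕ} (head : Fin n → Option (Fin n)) : Prop :=
  ∃ r : Fin n, head r = none ∧ (∀ r' : Fin n, head r' = none → r' = r) ∧
    ∀ j : Fin n, Relation.ReflTransGen (fun a b => head a = some b) j r

/-- A dependency tree is projective if every position's set of descendants is an
interval of consecutive positions. -/
def Projective {n : ℕ} (head : Fin n → Option (Fin n)) : Prop :=
  ∀ i : Fin n, ∃ a b : Fin n,
    ∀ j : Fin n, Relation.ReflTransGen (fun x y => head x = some y) j i ↔ (a ≤ j ∧ j ≤ b)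

/-- The six hexatags: `tL`/`tR` are terminal tags (leaf that is a left/right child);
`leftL`/`leftR` are `⇐L`/`⇐R` (internal left child with head-label L/R);
`rightL`/`rightR` are `⇒L`/`⇒R` (internal right child with head-label L/R). -/
inductive Hexatag : Type where
  | tL | tR | leftL | leftR | rightL | rightR
deriving DecidableEq

/-- A hexatag is terminal if it is `tL` or `tR`. -/
def Hexatag.isTerminal : Hexatag → Prop
  | .tL => True
  | .tR => True
  | _ => False

/-- In-order linearization; the Boolean records whether the current subtree is a
right child of its parent (the root counts as a left child by convention). -/
def BHT.hexatagsAux : BHT → Bool → List Hexatag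
  | .leaf, false => [.tL]
  | .leaf, true => [.tR]
  | .nodeL l r, b =>
      l.hexatagsAux false ++ (if b then Hexatag.rightL else Hexatag.leftL) :: r.hexatagsAux true
  | .nodeR l r, b =>
      l.hexatagsAux false ++ (if b then Hexatag.rightR else Hexatag.leftR) :: r.hexatagsAux true

/-- The hexatag linearization of a BHT. -/
def BHT.hexatags (T : BHT) : List Hexatag := T.hexatagsAux false

/-- The tags emitted for the leaves of a BHT, in left-to-right order. -/
def BHT.leafTagsAux : BHT → Bool → List Hexatag
  | .leaf, false => [.tL]
  | .leaf, true => [.tR]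
  | .nodeL l r, _ => l.leafTagsAux false ++ r.leafTagsAux true
  | .nodeR l r, _ => l.leafTagsAux false ++ r.leafTagsAux true

/-- The tags emitted for the leaves of a BHT in left-to-right order (root
counts as a left child by convention). -/
def BHT.leafTags (T : BHT) : List Hexatag := T.leafTagsAux false

/-- Partial BHTs: binary head trees possibly containing a dummy placeholder. -/
inductive PBHT : Type where
  | dummy : PBHT
  | leaf : PBHT
  | nodeL (l r : PBHT) : PBHT
  | nodeR (l r : PBHT) : PBHT
deriving DecidableEq

/-- Does a partial BHT contain a dummy? -/
def PBHT.hasDummy : PBHT → Bool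
  | .dummy => true
  | .leaf => false
  | .nodeL l r => l.hasDummy || r.hasDummy
  | .nodeR l r => l.hasDummy || r.hasDummy

/-- Substitute `u` for the dummy in a partial BHT. -/
def PBHT.subst : PBHT → PBHT → PBHT
  | .dummy, u => u
  | .leaf, _ => .leaf
  | .nodeL l r, u => .nodeL (l.subst u) (r.subst u)
  | .nodeR l r, u => .nodeR (l.subst u) (r.subst u)

/-- One step of the left-corner decoder on a stack of partial BHTs. -/
def hexStep : List PBHT → Hexatag → Option (List PBHT)
  | st, .tL => some (.leaf :: st)
  | t :: st, .tR => if t.hasDummy then some (t.subst .leaf :: st) else none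
  | t :: st, .leftL => some (.nodeL t .dummy :: st)
  | t :: st, .leftR => some (.nodeR t .dummy :: st)
  | t :: u :: st, .rightL =>
      if u.hasDummy then some (u.subst (.nodeL t .dummy) :: st) else none
  | t :: u :: st, .rightR =>
      if u.hasDummy then some (u.subst (.nodeR t .dummy) :: st) else none
  | _, _ => none

/-- The left-corner decoder: run the stack operations; succeed iff every
operation is defined and the final stack is a single dummy-free tree. -/
def tags2bht (τ : List Hexatag) : Option PBHT :=
  match τ.foldlM hexStep ([] : List PBHT) with
  | some [t] => if t.hasDummy then none else some t
  | _ => none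

/-- Embedding of BHTs into partial BHTs. -/
def BHT.toPBHT : BHT → PBHT
  | .leaf => .leaf
  | .nodeL l r => .nodeL l.toPBHT r.toPBHT
  | .nodeR l r => .nodeR l.toPBHT r.toPBHT

/-- Stack-count increment of a hexatag. -/
def Hexatag.delta : Hexatag → ℤ
  | .tL => 1
  | .tR => 0
  | .leftL => 0
  | .leftR => 0
  | .rightL => -1
  | .rightR => -1

/-- Running stack count `sₖ` after the first `k` tags of `τ`. -/
def stackCount (τ : List Hexatag) (k : ℕ) : ℤ :=
  ((τ.take k).map Hexatag.delta).sum

/-- Validity of a hexatag list (0-indexed: Lean index `k` is 1-indexed position `k+1`). -/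
def ValidTags (τ : List Hexatag) : Prop :=
  (τ.length % 2 = 1 ∧
    ∀ k : ℕ, ∀ t : Hexatag, τ[k]? = some t →
      (k % 2 = 0 → t.isTerminal) ∧ (k % 2 = 1 → ¬ t.isTerminal)) ∧
  τ[0]? = some Hexatag.tL ∧
  (∀ k : ℕ, ∀ t : Hexatag, τ[k]? = some t →
    (t = Hexatag.rightL ∨ t = Hexatag.rightR) → 2 ≤ stackCount τ k) ∧
  stackCount τ τ.length = 1

/-!
A left-corner parser recovers a tree from its hexatags, read from left to right. It keeps a stack of
unfinished trees, each missing its last right child. The tag `tL` produces a finished tree, which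
`⇐` turns into a new unfinished tree and `⇒` grafts into the one on top of the stack, while `tR`
finishes the top one. The stack count is the number of trees the parser stores, so validity says
precisely that no step gets stuck and that one finished tree is left at the end. Every state
determines the tags read so far, hence parser and linearization are inverse to each other.
-/

theorem BHT.hexatags_leaf : leaf.hexatags = [.tL] := rfl

theorem BHT.length_hexatagsAux_add_one (T : BHT) (b : Bool) :
    (T.hexatagsAux b).length + 1 = 2 * T.numLeaves := by
  induction T generalizing b with
  | leaf => cases b <;> rfl
  | nodeL l r ihl ihr | nodeR l r ihl ihr =>
    simp only [hexatagsAux, List.length_append, List.length_cons, numLeaves]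
    linarith [ihl false, ihr true]

theorem BHT.length_hexatags_add_one (T : BHT) : T.hexatags.length + 1 = 2 * T.numLeaves :=
  T.length_hexatagsAux_add_one false

/-- The conditions which validity imposes on a tag `x` preceded by exactly the tags `τ`. -/
def Hexatag.CanFollow (x : Hexatag) (τ : List Hexatag) : Prop :=
  (x.isTerminal ↔ Even τ.length) ∧ (τ = [] → x = .tL) ∧
    (x = .rightL ∨ x = .rightR → 2 ≤ (τ.map delta).sum)

/-- The part of validity that is inherited by prefixes: the conditions on the final length and on
the final stack count are left out. -/
def IsValidPrefix (τ : List Hexatag) : Prop :=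
  ∀ (k : ℕ) (x : Hexatag), τ[k]? = some x → x.CanFollow (τ.take k)

theorem isValidPrefix_nil : IsValidPrefix [] := by
  simp [IsValidPrefix]

theorem isValidPrefix_concat {τ : List Hexatag} {x : Hexatag} :
    IsValidPrefix (τ ++ [x]) ↔ IsValidPrefix τ ∧ x.CanFollow τ := by
  constructor
  · intro h
    refine ⟨fun k y hk ↦ ?_, by simpa using h τ.length x (by simp)⟩
    obtain ⟨hlt, -⟩ := List.getElem?_eq_some_iff.1 hk
    rw [← List.take_append_of_le_length hlt.le (l₂ := [x])]
    exact h k y (by rwa [List.getElem?_append_left hlt])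
  · rintro ⟨hτ, hx⟩ k y hk
    obtain hlt | rfl | hgt := lt_trichotomy k τ.length
    · rw [List.take_append_of_le_length hlt.le]
      exact hτ k y (by rwa [List.getElem?_append_left hlt] at hk)
    · obtain rfl : x = y := by simpa using hk
      simpa using hx
    · rw [List.getElem?_eq_none (by simpa using hgt)] at hk
      contradiction

theorem validTags_iff {τ : List Hexatag} :
    ValidTags τ ↔ IsValidPrefix τ ∧ Odd τ.length ∧ (τ.map Hexatag.delta).sum = 1 := by
  rw [Nat.odd_iff]
  have parity_iff {k : ℕ} {x : Hexatag} (hk : τ[k]? = some x) :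
      (x.isTerminal ↔ Even (τ.take k).length) ↔
        (k % 2 = 0 → x.isTerminal) ∧ (k % 2 = 1 → ¬ x.isTerminal) := by
    obtain ⟨hlt, -⟩ := List.getElem?_eq_some_iff.1 hk
    rw [List.length_take_of_le hlt.le, Nat.even_iff]
    grind
  constructor
  · rintro ⟨⟨hodd, hparity⟩, hfirst, hstack, hsum⟩
    refine ⟨fun k x hk ↦ ⟨(parity_iff hk).2 (hparity k x hk), fun hnil ↦ ?_, hstack k x hk⟩,
      hodd, by simpa [stackCount] using hsum⟩
    obtain rfl | rfl := List.take_eq_nil_iff.1 hnil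
    · simpa [hk] using hfirst
    · simp at hk
  · rintro ⟨hprefix, hodd, hsum⟩
    refine ⟨⟨hodd, fun k x hk ↦ (parity_iff hk).1 (hprefix k x hk).1⟩, ?_,
      fun k x hk ↦ (hprefix k x hk).2.2, by simpa [stackCount] using hsum⟩
    cases τ with
    | nil => simp at hodd
    | cons x τ => simpa using (hprefix 0 x rfl).2.1 rfl

/-- A tree in left-child position whose rightmost leaf is replaced by a hole. It is stored as its
right spine: `extendL c l` puts `BHT.nodeL l` with a new hole into the hole of `c`. -/
inductive OpenTree : Type where
  | ofNodeL (l : BHT) : OpenTree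
  | ofNodeR (l : BHT) : OpenTree
  | extendL (c : OpenTree) (l : BHT) : OpenTree
  | extendR (c : OpenTree) (l : BHT) : OpenTree

namespace OpenTree

/-- The tree obtained by putting `r` into the hole. -/
def fill : OpenTree → BHT → BHT
  | ofNodeL l, r => .nodeL l r
  | ofNodeR l, r => .nodeR l r
  | extendL c l, r => c.fill (.nodeL l r)
  | extendR c l, r => c.fill (.nodeR l r)

/-- The in-order linearization of an open tree, in which the hole emits nothing. -/
def hexatags : OpenTree → List Hexatag
  | ofNodeL l => l.hexatags ++ [.leftL]
  | ofNodeR l => l.hexatags ++ [.leftR]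
  | extendL c l => c.hexatags ++ l.hexatags ++ [.rightL]
  | extendR c l => c.hexatags ++ l.hexatags ++ [.rightR]

theorem hexatags_fill (c : OpenTree) (r : BHT) :
    (c.fill r).hexatags = c.hexatags ++ r.hexatagsAux true := by
  induction c generalizing r <;> simp_all [fill, hexatags, BHT.hexatags, BHT.hexatagsAux]

theorem hexatags_ne_nil (c : OpenTree) : c.hexatags ≠ [] := by
  cases c <;> simp [hexatags]

end OpenTree

/-- A state of the left-corner parser: a stack of open trees (topmost first) and, when the next tag
has to be nonterminal, the finished tree `T` above it. -/
inductive ParserState : Type where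
  | awaiting (st : List OpenTree) : ParserState
  | holding (T : BHT) (st : List OpenTree) : ParserState

namespace ParserState

/-- The states in which the next tag has to be terminal. -/
def IsAwaiting : ParserState → Prop
  | awaiting _ => True
  | holding _ _ => False

/-- The number of trees, open or finished, stored in a state; it realizes the stack count. -/
def height : ParserState → ℤ
  | awaiting st => st.length
  | holding _ st => st.length + 1

/-- The tags of the trees stored in a state, from the bottom of the stack to the top. -/
def tags : ParserState → List Hexatag
  | awaiting st => st.reverse.flatMap OpenTree.hexatags
  | holding T st => st.reverse.flatMap OpenTree.hexatags ++ T.hexatags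

/-- The transition of the parser on reading one tag, `none` if it gets stuck. -/
def step : ParserState → Hexatag → Option ParserState
  | awaiting st, .tL => some (holding .leaf st)
  | awaiting (c :: st), .tR => some (holding (c.fill .leaf) st)
  | holding T st, .leftL => some (awaiting (.ofNodeL T :: st))
  | holding T st, .leftR => some (awaiting (.ofNodeR T :: st))
  | holding T (c :: st), .rightL => some (awaiting (c.extendL T :: st))
  | holding T (c :: st), .rightR => some (awaiting (c.extendR T :: st))
  | _, _ => none

/-- The state reached from `s` by reading a list of tags, `none` if the parser gets stuck. -/
def run (s : ParserState) (τ : List Hexatag) : Option ParserState :=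
  τ.foldlM step s

theorem tags_eq_nil_iff {s : ParserState} : s.tags = [] ↔ s = awaiting [] := by
  cases s with
  | awaiting st => cases st <;> simp [tags, OpenTree.hexatags_ne_nil]
  | holding T st => cases T <;> simp [tags, BHT.hexatags, BHT.hexatagsAux]

section Step

variable {s s' : ParserState} {x : Hexatag}

theorem tags_of_step (h : s.step x = some s') : s'.tags = s.tags ++ [x] := by
  revert h
  fun_cases step s x <;> rintro ⟨⟩ <;>
    simp [tags, OpenTree.hexatags_fill, OpenTree.hexatags, BHT.hexatags_leaf, BHT.hexatagsAux]

theorem height_of_step (h : s.step x = some s') : s'.height = s.height + x.delta := by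
  revert h
  fun_cases step s x <;> rintro ⟨⟩ <;> simp [height, Hexatag.delta]

theorem isAwaiting_of_step (h : s.step x = some s') : s'.IsAwaiting ↔ ¬ s.IsAwaiting := by
  revert h
  fun_cases step s x <;> rintro ⟨⟩ <;> simp [IsAwaiting]

theorem isSome_step_iff (s : ParserState) (x : Hexatag) :
    (s.step x).isSome ↔ (x.isTerminal ↔ s.IsAwaiting) ∧ (s = awaiting [] → x = .tL) ∧
      (x = .rightL ∨ x = .rightR → 2 ≤ s.height) := by
  rcases s with (_ | ⟨c, st⟩) | ⟨T, _ | ⟨c, st⟩⟩ <;> cases x <;>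
    simp [step, Hexatag.isTerminal, IsAwaiting, height] <;> omega

end Step

@[simp]
theorem run_nil (s : ParserState) : s.run [] = some s := rfl

@[simp]
theorem run_cons (s : ParserState) (x : Hexatag) (τ : List Hexatag) :
    s.run (x :: τ) = (s.step x).bind (run · τ) := rfl

theorem run_append (s : ParserState) (τ σ : List Hexatag) :
    s.run (τ ++ σ) = (s.run τ).bind (run · σ) :=
  List.foldlM_append

theorem run_concat (s : ParserState) (τ : List Hexatag) (x : Hexatag) :
    s.run (τ ++ [x]) = (s.run τ).bind (step · x) := by
  simp [run_append]

section Run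

variable {s : ParserState} {τ : List Hexatag}

@[elab_as_elim]
theorem run_induction {s₀ : ParserState} {motive : List Hexatag → ParserState → Prop}
    (nil : motive [] s₀)
    (concat : ∀ τ x s s', s.step x = some s' → motive τ s → motive (τ ++ [x]) s')
    (h : s₀.run τ = some s) : motive τ s := by
  induction τ using List.reverseRecOn generalizing s with
  | nil => cases h; exact nil
  | append_singleton τ x ih =>
    rw [run_concat, Option.bind_eq_some_iff] at h
    obtain ⟨s', hs', hx⟩ := h
    exact concat τ x s' s hx (ih hs')

theorem tags_of_run (h : (awaiting []).run τ = some s) : s.tags = τ := by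
  refine run_induction rfl (fun τ x s s' hx ih ↦ ?_) h
  rw [tags_of_step hx, ih]

theorem height_of_run (h : (awaiting []).run τ = some s) :
    s.height = (τ.map Hexatag.delta).sum := by
  refine run_induction rfl (fun τ x s s' hx ih ↦ ?_) h
  simp [height_of_step hx, ih]

theorem isAwaiting_iff_even_of_run (h : (awaiting []).run τ = some s) :
    s.IsAwaiting ↔ Even τ.length := by
  refine run_induction (by simp [IsAwaiting]) (fun τ x s s' hx ih ↦ ?_) h
  rw [isAwaiting_of_step hx, ih, List.length_append, List.length_singleton, Nat.even_add_one]

end Run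

theorem run_hexatagsAux (T : BHT) :
    (∀ st, (awaiting st).run (T.hexatagsAux false) = some (holding T st)) ∧
      ∀ c st, (awaiting (c :: st)).run (T.hexatagsAux true) = some (holding (c.fill T) st) := by
  induction T with
  | leaf => exact ⟨fun _ ↦ rfl, fun _ _ ↦ rfl⟩
  | nodeL l r ihl ihr | nodeR l r ihl ihr =>
    simp [BHT.hexatagsAux, run_append, ihl.1, ihr.2, step, OpenTree.fill]

theorem run_eq_holding_iff {τ : List Hexatag} {T : BHT} :
    (awaiting []).run τ = some (holding T []) ↔ T.hexatags = τ := by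
  constructor
  · intro h
    simpa [tags] using tags_of_run h
  · rintro rfl
    exact (run_hexatagsAux T).1 []

theorem isSome_step_iff_canFollow {s : ParserState} {τ : List Hexatag}
    (h : (awaiting []).run τ = some s) (x : Hexatag) :
    (s.step x).isSome ↔ x.CanFollow τ := by
  rw [isSome_step_iff, ← tags_eq_nil_iff, tags_of_run h, isAwaiting_iff_even_of_run h,
    height_of_run h, Hexatag.CanFollow]

theorem isSome_run_iff {τ : List Hexatag} :
    ((awaiting []).run τ).isSome ↔ IsValidPrefix τ := by
  induction τ using List.reverseRecOn with
  | nil => simp [isValidPrefix_nil]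
  | append_singleton τ x ih =>
    rw [run_concat, isValidPrefix_concat, ← ih]
    cases h : (awaiting []).run τ with
    | none => simp
    | some s => simp [isSome_step_iff_canFollow h]

theorem exists_eq_holding_iff {s : ParserState} :
    (∃ T, s = holding T []) ↔ ¬ s.IsAwaiting ∧ s.height = 1 := by
  cases s <;> simp [IsAwaiting, height]

end ParserState

theorem BHT.hexatags_injective : Function.Injective BHT.hexatags := by
  intro T T' h
  have hrun := ParserState.run_eq_holding_iff.2 h
  rw [ParserState.run_eq_holding_iff.2 rfl] at hrun
  simpa using hrun.symm

theorem validTags_iff_exists_hexatags_eq {τ : List Hexatag} :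
    ValidTags τ ↔ ∃ T : BHT, T.hexatags = τ := by
  simp_rw [← ParserState.run_eq_holding_iff]
  rw [validTags_iff, ← ParserState.isSome_run_iff]
  cases h : (ParserState.awaiting []).run τ with
  | none => simp
  | some s =>
    rw [← ParserState.height_of_run h, ← Nat.not_even_iff_odd,
      ← ParserState.isAwaiting_iff_even_of_run h, ← ParserState.exists_eq_holding_iff]
    simp

theorem hexatags_bijOn_valid (n : ℕ) (hn : 1 ≤ n) :
    Set.BijOn BHT.hexatags {T : BHT | T.numLeaves = n}
      {τ : List Hexatag | τ.length = 2 * n - 1 ∧ ValidTags τ} := by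
  refine ⟨?_, BHT.hexatags_injective.injOn, ?_⟩
  · rintro T rfl
    have hlen := T.length_hexatags_add_one
    exact ⟨by omega, validTags_iff_exists_hexatags_eq.2 ⟨T, rfl⟩⟩
  · rintro τ ⟨hlen, hτ⟩
    obtain ⟨T, rfl⟩ := validTags_iff_exists_hexatags_eq.1 hτ
    have hT := T.length_hexatags_add_one
    exact ⟨T, show T.numLeaves = n by omega, rfl⟩
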